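/- arXiv:2312.05240 — 2 statements merged into one kernel-verified Lean document; each statement's English description precedes it below -/
import Mathlib

section
/- In the group ring R[P], the product β·α equals 1; consequently α is a unit of R[P] with inverse β. -/
open MvPolynomial

noncomputable section

/-- The two relators of the Promislow group `P = ⟨a, b | b⁻¹a²b = a⁻², a⁻¹b²a = b⁻²⟩`,
written as words that equal the identity: `b⁻¹a²ba²` and `a⁻¹b²ab²`. -/
def Prels : Set (FreeGroup (Fin 2)) :=
  {(FreeGroup.of 1)⁻¹ * (FreeGroup.of 0) ^ 2 * (FreeGroup.of 1) * (FreeGroup.of 0) ^ 2,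
   (FreeGroup.of 0)⁻¹ * (FreeGroup.of 1) ^ 2 * (FreeGroup.of 0) * (FreeGroup.of 1) ^ 2}

/-- The Promislow group. -/
abbrev P : Type := PresentedGroup Prels

def pa : P := PresentedGroup.of 0
def pb : P := PresentedGroup.of 1
def px : P := pa ^ 2
def py : P := pb ^ 2
def pz : P := (pa * pb) ^ 2

/-- The ring `R = ℤ[s,t]/⟨s⁴+1, t⁴+1⟩`. -/
abbrev Rr : Type :=
  MvPolynomial (Fin 2) ℤ ⧸
    Ideal.span {(X 0 : MvPolynomial (Fin 2) ℤ) ^ 4 + 1, (X 1 : MvPolynomial (Fin 2) ℤ) ^ 4 + 1}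

def s : Rr := Ideal.Quotient.mk _ (X 0)
def t : Rr := Ideal.Quotient.mk _ (X 1)

/-- The image of a group element in the group ring `R[P]`. -/
def G (g : P) : MonoidAlgebra Rr P := MonoidAlgebra.of Rr P g

def α1 : MonoidAlgebra Rr P :=
  1 + t ^ 2 • G (px * pz⁻¹) - t ^ 2 • G (px⁻¹ * pz⁻¹) - s ^ 2 • G (py * pz⁻¹)
    + s ^ 2 • G (py⁻¹ * pz⁻¹)

def αa : MonoidAlgebra Rr P :=
  -(s ^ 2 • G px⁻¹) + 1 - G (px⁻¹ * py⁻¹ * pz) + s ^ 2 • G (py * pz)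

def αb : MonoidAlgebra Rr P :=
  G (px⁻¹ * py⁻¹ * pz) - t ^ 2 • G (px * pz) + t ^ 2 • G (py⁻¹ * pz ^ 2) - G (pz ^ 2)

def αab : MonoidAlgebra Rr P :=
  -(t ^ 2 • G (px⁻¹ * pz⁻¹)) - s ^ 2 • G (py * pz⁻¹) + (s ^ 2 * t ^ 2) • G pz⁻¹
    + G (px⁻¹ * py * pz⁻¹) + s ^ 2 • G (px⁻¹ * pz⁻¹ ^ 2) + t ^ 2 • G (py * pz⁻¹ ^ 2)
    - G (pz⁻¹ ^ 2) - (s ^ 2 * t ^ 2) • G (px⁻¹ * py * pz⁻¹ ^ 2)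

/-- The unit `α ∈ R[P]`. -/
def αU : MonoidAlgebra Rr P :=
  α1 + s • (αa * G pa) + t • (αb * G pb) + (s * t) • (αab * G (pa * pb))

def β1 : MonoidAlgebra Rr P :=
  1 + t ^ 2 • G (px⁻¹ * pz) - t ^ 2 • G (px * pz) + s ^ 2 • G (py * pz) - s ^ 2 • G (py⁻¹ * pz)

def βa : MonoidAlgebra Rr P :=
  -1 + s ^ 2 • G px⁻¹ - s ^ 2 • G (py * pz) + G (px⁻¹ * py⁻¹ * pz)

def βb : MonoidAlgebra Rr P :=
  -G (px⁻¹ * py⁻¹ * pz) + t ^ 2 • G (px * pz) - t ^ 2 • G (py⁻¹ * pz ^ 2) + G (pz ^ 2)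

def βab : MonoidAlgebra Rr P :=
  (s ^ 2 * t ^ 2) • G (px⁻¹ * py) + 1 - t ^ 2 • G py - s ^ 2 • G px⁻¹
    - G (px⁻¹ * py * pz) - (s ^ 2 * t ^ 2) • G pz + s ^ 2 • G (py * pz) + t ^ 2 • G (px⁻¹ * pz)

/-- The inverse unit `β ∈ R[P]`. -/
def βU : MonoidAlgebra Rr P :=
  β1 + s • (βa * G pa) + t • (βb * G pb) + (s * t) • (βab * G (pa * pb))

/-!
`R[P]` is a crossed product: it is spanned over the commutative ring `R[x^±1, y^±1, z^±1]` by
`1, a, b, ab`, and conjugation by `a` or `b` inverts two of `x, y, z` and fixes the third. Hence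
`β * α = 1` amounts to four identities between Laurent polynomials, valid modulo `s^4 + 1` and
`t^4 + 1`. By this identity, right multiplication by `α` is a surjective endomorphism of a finitely
generated module over a commutative ring. Such an endomorphism is injective, and it sends both
`α * β` and `1` to `α`, so `α * β = 1`.
-/

section DedekindFinite

variable {S A : Type*} [Semiring S] [OrzechProperty S] [Semiring A] [Module S A]
  [IsScalarTower S A A]

theorem mul_eq_one_symm_of_fg {M : Submodule S A} (hM : M.FG) (one_mem : 1 ∈ M) {u v : A}
    (mul_u_mem : ∀ m ∈ M, m * u ∈ M) (mul_v_mem : ∀ m ∈ M, m * v ∈ M) (huv : u * v = 1) :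
    v * u = 1 := by
  have : Module.Finite S M := .of_fg hM
  let mulV : M →ₗ[S] M := (LinearMap.mulRight S v).restrict mul_v_mem
  have mulV_surjective : Function.Surjective mulV := fun m ↦
    ⟨⟨m * u, mul_u_mem m m.2⟩, Subtype.ext <| by simp [mulV, LinearMap.restrict, mul_assoc, huv]⟩
  have mulV_injective := OrzechProperty.injective_of_surjective_endomorphism mulV mulV_surjective
  have vu_mem : v * u ∈ M := mul_u_mem v <| by simpa using mul_v_mem 1 one_mem
  have : (⟨v * u, vu_mem⟩ : M) = ⟨1, one_mem⟩ :=
    mulV_injective <| Subtype.ext <| by simp [mulV, LinearMap.restrict, mul_assoc, huv]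
  exact congrArg Subtype.val this

end DedekindFinite

section InvertedSquares

variable {H : Type*} [Group H] {a b u : H}

theorem semiconjBy_inv_swap (h : SemiconjBy a u u⁻¹) : SemiconjBy a u⁻¹ u := by
  simpa using h.inv_right

theorem semiconjBy_inv_of_conj_mul_eq_one (h : a⁻¹ * u * a * u = 1) : SemiconjBy a u u⁻¹ := by
  have : SemiconjBy a u⁻¹ u := by
    rw [← eq_inv_of_mul_eq_one_left h]
    simp [SemiconjBy, mul_assoc]
  simpa using this.inv_right

theorem commute_sq_of_semiconjBy_inv (h : SemiconjBy a u u⁻¹) : Commute (a ^ 2) u := by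
  rw [sq]
  exact (semiconjBy_inv_swap h).mul_left h

variable (ha : SemiconjBy a (b ^ 2) (b ^ 2)⁻¹) (hb : SemiconjBy b (a ^ 2) (a ^ 2)⁻¹)
include ha hb

theorem sq_mul_swap_eq_inv : (b * a) ^ 2 = ((a * b) ^ 2)⁻¹ := by
  rw [eq_inv_iff_mul_eq_one]
  calc (b * a) ^ 2 * (a * b) ^ 2 = b * a * (b * a ^ 2) * b * a * b := by simp only [sq, mul_assoc]
    _ = b * a⁻¹ * (b ^ 2 * a) * b := by rw [hb.eq]; simp [sq, mul_assoc]
    _ = 1 := by rw [← (semiconjBy_inv_swap ha).eq]; simp [sq, mul_assoc]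

theorem semiconjBy_left_sq_mul : SemiconjBy a ((a * b) ^ 2) ((a * b) ^ 2)⁻¹ := by
  have : SemiconjBy a ((b * a) ^ 2) ((a * b) ^ 2) := by simp [SemiconjBy, sq, mul_assoc]
  simpa [sq_mul_swap_eq_inv ha hb] using this.inv_right

theorem semiconjBy_right_sq_mul : SemiconjBy b ((a * b) ^ 2) ((a * b) ^ 2)⁻¹ := by
  have : SemiconjBy b ((a * b) ^ 2) ((b * a) ^ 2) := by simp [SemiconjBy, sq, mul_assoc]
  rwa [sq_mul_swap_eq_inv ha hb] at this

end InvertedSquares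

namespace Promislow

/-- Left coordinates with respect to the transversal `1, a, b, ab` of the translation lattice
`⟨x, y, z⟩` of the Promislow group. -/
@[ext]
structure Coords (S : Type*) where
  one : S
  a : S
  b : S
  ab : S

variable {S T A : Type*} [CommRing S] [CommRing T]

namespace Coords

/-- The coordinates obtained by applying a ring homomorphism to each coordinate. -/
def map (f : S →+* T) (p : Coords S) : Coords T :=
  ⟨f p.one, f p.a, f p.b, f p.ab⟩

/-- The element `p.one + p.a a + p.b b + p.ab ab` with coordinates `p`. -/
def eval [Ring A] [Module S A] (a b : A) (p : Coords S) : A :=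
  p.one • 1 + p.a • a + p.b • b + p.ab • (a * b)

/-- The coordinates of the product of elements with coordinates `p` and `q`, where `qa`, `qb`,
`qab` are the coordinates of `q` conjugated by `a`, `b`, `ab`. The unit factors express the
products of two elements of the transversal, for instance `b * a = x⁻¹ y z⁻¹ * (a * b)`. -/
def twistedMul (x y z : Sˣ) (p q qa qb qab : Coords S) : Coords S where
  one := p.one * q.one + p.a * qa.a * x + p.b * qb.b * y + p.ab * qab.ab * z
  a := p.one * q.a + p.a * qa.one + p.b * qb.ab * (x⁻¹ * z⁻¹ : Sˣ) + p.ab * qab.b * (y⁻¹ : Sˣ)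
  b := p.one * q.b + p.a * qa.ab * x + p.b * qb.one + p.ab * qab.a * (y⁻¹ * z : Sˣ)
  ab := p.one * q.ab + p.a * qa.b + p.b * qb.a * (x⁻¹ * y * z⁻¹ : Sˣ) + p.ab * qab.one

theorem mem_span_iff_exists_eval [Ring A] [Module S A] {a b m : A} :
    m ∈ Submodule.span S {1, a, b, a * b} ↔ ∃ p : Coords S, p.eval a b = m := by
  simp only [Submodule.mem_span_insert, Submodule.mem_span_singleton]
  constructor
  · rintro ⟨p, _, ⟨q, _, ⟨r, _, ⟨u, rfl⟩, rfl⟩, rfl⟩, rfl⟩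
    exact ⟨⟨p, q, r, u⟩, by simp [eval, add_assoc]⟩
  · rintro ⟨⟨p, q, r, u⟩, rfl⟩
    exact ⟨p, _, ⟨q, _, ⟨r, _, ⟨u, rfl⟩, rfl⟩, rfl⟩, by simp [eval, add_assoc]⟩

end Coords

section Polynomials

variable (x y z : Sˣ) (s t : S)

/-- The coordinates of `α`; the scalars `s`, `t`, `st` in front of `α_a`, `α_b`, `α_{ab}` are
included. -/
def alpha : Coords S where
  one := 1 + t ^ 2 * (x * z⁻¹ : Sˣ) - t ^ 2 * (x⁻¹ * z⁻¹ : Sˣ) - s ^ 2 * (y * z⁻¹ : Sˣ)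
    + s ^ 2 * (y⁻¹ * z⁻¹ : Sˣ)
  a := s * (-(s ^ 2 * (x⁻¹ : Sˣ)) + 1 - (x⁻¹ * y⁻¹ * z : Sˣ) + s ^ 2 * (y * z : Sˣ))
  b := t * ((x⁻¹ * y⁻¹ * z : Sˣ) - t ^ 2 * (x * z : Sˣ) + t ^ 2 * (y⁻¹ * z ^ 2 : Sˣ)
    - (z ^ 2 : Sˣ))
  ab := s * t * (-(t ^ 2 * (x⁻¹ * z⁻¹ : Sˣ)) - s ^ 2 * (y * z⁻¹ : Sˣ)
    + s ^ 2 * t ^ 2 * (z⁻¹ : Sˣ) + (x⁻¹ * y * z⁻¹ : Sˣ) + s ^ 2 * (x⁻¹ * z⁻¹ ^ 2 : Sˣ)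
    + t ^ 2 * (y * z⁻¹ ^ 2 : Sˣ) - (z⁻¹ ^ 2 : Sˣ) - s ^ 2 * t ^ 2 * (x⁻¹ * y * z⁻¹ ^ 2 : Sˣ))

/-- The coordinates of `β`; the scalars `s`, `t`, `st` in front of `β_a`, `β_b`, `β_{ab}` are
included. -/
def beta : Coords S where
  one := 1 + t ^ 2 * (x⁻¹ * z : Sˣ) - t ^ 2 * (x * z : Sˣ) + s ^ 2 * (y * z : Sˣ)
    - s ^ 2 * (y⁻¹ * z : Sˣ)
  a := s * (-1 + s ^ 2 * (x⁻¹ : Sˣ) - s ^ 2 * (y * z : Sˣ) + (x⁻¹ * y⁻¹ * z : Sˣ))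
  b := t * (-(x⁻¹ * y⁻¹ * z : Sˣ) + t ^ 2 * (x * z : Sˣ) - t ^ 2 * (y⁻¹ * z ^ 2 : Sˣ)
    + (z ^ 2 : Sˣ))
  ab := s * t * (s ^ 2 * t ^ 2 * (x⁻¹ * y : Sˣ) + 1 - t ^ 2 * y - s ^ 2 * (x⁻¹ : Sˣ)
    - (x⁻¹ * y * z : Sˣ) - s ^ 2 * t ^ 2 * z + s ^ 2 * (y * z : Sˣ) + t ^ 2 * (x⁻¹ * z : Sˣ))

theorem map_alpha (f : S →+* T) : (alpha x y z s t).map f =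
    alpha (Units.map (f : S →* T) x) (Units.map (f : S →* T) y) (Units.map (f : S →* T) z)
      (f s) (f t) := by
  ext <;> simp [alpha, Coords.map]

variable {s t} (hs : s ^ 4 = -1) (ht : t ^ 4 = -1)
include hs ht

theorem twistedMul_beta_alpha :
    (beta x y z s t).twistedMul x y z (alpha x y z s t) (alpha x y⁻¹ z⁻¹ s t)
      (alpha x⁻¹ y z⁻¹ s t) (alpha x⁻¹ y⁻¹ z s t) = ⟨1, 0, 0, 0⟩ := by
  have hx := x.mul_inv
  have hy := y.mul_inv
  have hz := z.mul_inv
  ext <;> simp only [Coords.twistedMul, alpha, beta, Units.val_mul, Units.val_pow_eq_pow_val,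
    inv_inv] <;> grind

end Polynomials

/-- Elements `a, b` of a ring `A` over `S`, conjugating the scalars through `σ, τ` and satisfying
the relations of the Promislow group, where the squares `x = a²`, `y = b²`, `z = (ab)²` are
scalars. -/
structure PromislowSystem [Ring A] [Module S A] (x y z : Sˣ) (σ τ : S →+* S) (a b : A) :
    Prop where
  a_mul_smul (p : S) (m : A) : a * p • m = σ p • (a * m)
  b_mul_smul (p : S) (m : A) : b * p • m = τ p • (b * m)
  a_mul_a : a * a = x • 1
  b_mul_b : b * b = y • 1
  ab_mul_ab : a * b * (a * b) = z • 1
  map_σ_x : Units.map (σ : S →* S) x = x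
  map_σ_y : Units.map (σ : S →* S) y = y⁻¹
  map_σ_z : Units.map (σ : S →* S) z = z⁻¹
  map_τ_x : Units.map (τ : S →* S) x = x⁻¹
  map_τ_y : Units.map (τ : S →* S) y = y
  map_τ_z : Units.map (τ : S →* S) z = z⁻¹

namespace PromislowSystem

variable [Ring A] [Module S A] {x y z : Sˣ} {σ τ : S →+* S} {a b : A}
  (h : PromislowSystem x y z σ τ a b)
include h

theorem a_mul_unit_smul (u : Sˣ) (m : A) : a * u • m = Units.map (σ : S →* S) u • (a * m) :=
  h.a_mul_smul u m

theorem b_mul_unit_smul (u : Sˣ) (m : A) : b * u • m = Units.map (τ : S →* S) u • (b * m) :=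
  h.b_mul_smul u m

theorem ab_mul_b : a * b * b = y⁻¹ • a := by
  rw [mul_assoc, h.b_mul_b, h.a_mul_unit_smul, h.map_σ_y, mul_one]

variable [IsScalarTower S A A]

theorem ab_mul_a : a * b * a = (y⁻¹ * z) • b := by
  have : y • (a * b * a) = z • b :=
    calc y • (a * b * a) = a * b * y⁻¹ • a := by
          rw [mul_assoc a b (y⁻¹ • a), h.b_mul_unit_smul, h.a_mul_unit_smul, map_inv, map_inv,
            h.map_τ_y, h.map_σ_y, inv_inv, mul_assoc]
      _ = a * b * (a * b) * b := by rw [← h.ab_mul_b, mul_assoc (a * b)]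
      _ = z • b := by rw [h.ab_mul_ab, smul_one_mul]
  rw [mul_smul, ← this, inv_smul_smul]

theorem b_mul_ab : b * (a * b) = (x⁻¹ * z⁻¹) • a := by
  have : x • (b * (a * b)) = z⁻¹ • a :=
    calc x • (b * (a * b)) = a * (a * b * (a * b)) := by
          rw [← smul_one_mul x, ← h.a_mul_a]; simp only [mul_assoc]
      _ = z⁻¹ • a := by rw [h.ab_mul_ab, h.a_mul_unit_smul, h.map_σ_z, mul_one]
  rw [mul_smul, ← this, inv_smul_smul]

theorem b_mul_a : b * a = (x⁻¹ * y * z⁻¹) • (a * b) := by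
  have : y⁻¹ • (b * a) = (x⁻¹ * z⁻¹) • (a * b) :=
    calc y⁻¹ • (b * a) = b * (a * b) * b := by
          rw [mul_assoc, h.ab_mul_b, h.b_mul_unit_smul, map_inv, h.map_τ_y]
      _ = (x⁻¹ * z⁻¹) • (a * b) := by rw [h.b_mul_ab, smul_mul_assoc]
  rw [mul_right_comm, mul_comm, mul_smul, ← this, smul_inv_smul]

theorem eval_mul_eval (p q : Coords S) :
    p.eval a b * q.eval a b =
      (p.twistedMul x y z q (q.map σ) (q.map τ) (q.map (σ.comp τ))).eval a b := by
  have a_mul_ab : a * (a * b) = x • b := by rw [← mul_assoc, h.a_mul_a, smul_one_mul]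
  have ab_mul_smul (r : S) (m : A) : a * b * r • m = σ (τ r) • (a * b * m) := by
    rw [mul_assoc, h.b_mul_smul, h.a_mul_smul, mul_assoc]
  simp only [Coords.eval, Coords.twistedMul, Coords.map, add_mul, mul_add, smul_mul_assoc,
    one_mul, mul_one, h.a_mul_smul, h.b_mul_smul, ab_mul_smul, h.a_mul_a, h.b_mul_b, h.ab_mul_ab,
    a_mul_ab, h.ab_mul_a, h.ab_mul_b, h.b_mul_a, h.b_mul_ab, Units.smul_def, RingHom.comp_apply]
  module

variable {s t : S} (hs : s ^ 4 = -1) (ht : t ^ 4 = -1) (hσs : σ s = s) (hσt : σ t = t)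
  (hτs : τ s = s) (hτt : τ t = t)
include hs ht hσs hσt hτs hτt

theorem eval_beta_mul_eval_alpha :
    (beta x y z s t).eval a b * (alpha x y z s t).eval a b = 1 := by
  have map_σ : (alpha x y z s t).map σ = alpha x y⁻¹ z⁻¹ s t := by
    rw [map_alpha, h.map_σ_x, h.map_σ_y, h.map_σ_z, hσs, hσt]
  have map_τ : (alpha x y z s t).map τ = alpha x⁻¹ y z⁻¹ s t := by
    rw [map_alpha, h.map_τ_x, h.map_τ_y, h.map_τ_z, hτs, hτt]
  have map_στ : (alpha x y z s t).map (σ.comp τ) = alpha x⁻¹ y⁻¹ z s t := by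
    change ((alpha x y z s t).map τ).map σ = _
    rw [map_τ, map_alpha, map_inv, map_inv, h.map_σ_x, h.map_σ_y, h.map_σ_z, inv_inv, hσs, hσt]
  rw [h.eval_mul_eval, map_σ, map_τ, map_στ, twistedMul_beta_alpha x y z hs ht]
  simp [Coords.eval]

omit hs ht hσs hσt hτs hτt in
theorem eval_mul_eval_symm {p q : Coords S} (hpq : p.eval a b * q.eval a b = 1) :
    q.eval a b * p.eval a b = 1 := by
  have mul_eval_mem (r : Coords S) : ∀ m ∈ Submodule.span S {1, a, b, a * b},
      m * r.eval a b ∈ Submodule.span S {1, a, b, a * b} := by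
    simp only [Coords.mem_span_iff_exists_eval]
    rintro _ ⟨m, rfl⟩
    exact ⟨_, (h.eval_mul_eval m r).symm⟩
  exact mul_eq_one_symm_of_fg (Submodule.fg_span (Set.toFinite _))
    (Submodule.subset_span (by simp)) (mul_eval_mem p) (mul_eval_mem q) hpq

end PromislowSystem

theorem mapDomainRingHom_algebraMap {R N H : Type*} [CommSemiring R] [Monoid N] [Monoid H]
    (f : N →* H) (r : R) :
    MonoidAlgebra.mapDomainRingHom R f (algebraMap R (MonoidAlgebra R N) r) =
      algebraMap R (MonoidAlgebra R H) r :=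
  RingHom.congr_fun (MonoidAlgebra.mapDomainRingHom_comp_algebraMap f) r

theorem semiconjBy_mapDomainRingHom {R N H : Type*} [CommSemiring R] [Monoid N] [Monoid H]
    {φ : N →* H} {σ : N →* N} {g : H} (hg : ∀ n, SemiconjBy g (φ n) (φ (σ n)))
    (p : MonoidAlgebra R N) :
    SemiconjBy (MonoidAlgebra.of R H g) (MonoidAlgebra.mapDomainRingHom R φ p)
      (MonoidAlgebra.mapDomainRingHom R φ (MonoidAlgebra.mapDomainRingHom R σ p)) := by
  induction p using MonoidAlgebra.induction_linear with
  | zero => simp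
  | add p q hp hq => simpa only [map_add] using hp.add_right hq
  | single n r => simp [SemiconjBy, MonoidAlgebra.single_mul_single, (hg n).eq]

theorem semiconjBy_pb_px : SemiconjBy pb px px⁻¹ :=
  semiconjBy_inv_of_conj_mul_eq_one <| PresentedGroup.one_of_mem (rels := Prels) (.inl rfl)

theorem semiconjBy_pa_py : SemiconjBy pa py py⁻¹ :=
  semiconjBy_inv_of_conj_mul_eq_one <| PresentedGroup.one_of_mem (rels := Prels) (.inr rfl)

theorem semiconjBy_pa_pz : SemiconjBy pa pz pz⁻¹ :=
  semiconjBy_left_sq_mul semiconjBy_pa_py semiconjBy_pb_px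

theorem semiconjBy_pb_pz : SemiconjBy pb pz pz⁻¹ :=
  semiconjBy_right_sq_mul semiconjBy_pa_py semiconjBy_pb_px

theorem commute_pa_px : Commute pa px := Commute.self_pow pa 2

theorem commute_pb_py : Commute pb py := Commute.self_pow pb 2

/-- The translation lattice `⟨x, y, z⟩` of the Promislow group, as an abstract
free abelian group. -/
abbrev Lattice : Type :=
  Multiplicative ℤ × Multiplicative ℤ × Multiplicative ℤ

/-- The homomorphism sending the standard basis of the lattice to `x`, `y`, `z`. -/
def latticeHom : Lattice →* P :=
  (zpowersHom P px).noncommCoprod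
    ((zpowersHom P py).noncommCoprod (zpowersHom P pz) fun _ _ ↦
      (commute_sq_of_semiconjBy_inv semiconjBy_pb_pz).zpow_zpow _ _)
    fun _ _ ↦ ((commute_sq_of_semiconjBy_inv semiconjBy_pa_py).zpow_zpow _ _).mul_right
      ((commute_sq_of_semiconjBy_inv semiconjBy_pa_pz).zpow_zpow _ _)

theorem latticeHom_apply (n : Lattice) :
    latticeHom n = px ^ n.1.toAdd * (py ^ n.2.1.toAdd * pz ^ n.2.2.toAdd) := rfl

theorem latticeHom_x : latticeHom (.ofAdd 1, 1, 1) = px := by simp [latticeHom_apply]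

theorem latticeHom_y : latticeHom (1, .ofAdd 1, 1) = py := by simp [latticeHom_apply]

theorem latticeHom_z : latticeHom (1, 1, .ofAdd 1) = pz := by simp [latticeHom_apply]

/-- Conjugation by `a` on the lattice: it fixes `x` and inverts `y` and `z`. -/
def conjA : Lattice →* Lattice :=
  (MonoidHom.id _).prodMap (invMonoidHom.prodMap invMonoidHom)

/-- Conjugation by `b` on the lattice: it fixes `y` and inverts `x` and `z`. -/
def conjB : Lattice →* Lattice :=
  invMonoidHom.prodMap ((MonoidHom.id _).prodMap invMonoidHom)

theorem semiconjBy_pa_latticeHom (n : Lattice) :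
    SemiconjBy pa (latticeHom n) (latticeHom (conjA n)) := by
  have hx := commute_pa_px.zpow_right n.1.toAdd
  have hy := semiconjBy_pa_py.zpow_right n.2.1.toAdd
  have hz := semiconjBy_pa_pz.zpow_right n.2.2.toAdd
  simpa [latticeHom_apply, conjA] using SemiconjBy.mul_right hx (hy.mul_right hz)

theorem semiconjBy_pb_latticeHom (n : Lattice) :
    SemiconjBy pb (latticeHom n) (latticeHom (conjB n)) := by
  have hx := semiconjBy_pb_px.zpow_right n.1.toAdd
  have hy := commute_pb_py.zpow_right n.2.1.toAdd
  have hz := semiconjBy_pb_pz.zpow_right n.2.2.toAdd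
  simpa [latticeHom_apply, conjB] using hx.mul_right (SemiconjBy.mul_right hy hz)

/-- The ring of Laurent polynomials over `R` in `x`, `y`, `z`. -/
abbrev LatticeRing : Type :=
  MonoidAlgebra Rr Lattice

/-- The ring homomorphism `R[x^±1, y^±1, z^±1] → R[P]`. -/
def latticeRingHom : LatticeRing →+* MonoidAlgebra Rr P :=
  MonoidAlgebra.mapDomainRingHom Rr latticeHom

instance : Module LatticeRing (MonoidAlgebra Rr P) :=
  Module.compHom _ latticeRingHom

theorem latticeRing_smul_def (p : LatticeRing) (m : MonoidAlgebra Rr P) :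
    p • m = latticeRingHom p * m := rfl

instance : IsScalarTower LatticeRing (MonoidAlgebra Rr P) (MonoidAlgebra Rr P) :=
  ⟨fun p m n ↦ mul_assoc (latticeRingHom p) m n⟩

theorem G_mul (g h : P) : G (g * h) = G g * G h :=
  map_mul _ g h

theorem G_pow (g : P) (n : ℕ) : G (g ^ n) = G g ^ n :=
  map_pow _ g n

/-- The embedding of the lattice in the unit group of its group ring. -/
def latticeUnit : Lattice →* LatticeRingˣ :=
  (Units.map (MonoidAlgebra.of Rr Lattice)).comp toUnits.toMonoidHom

/-- The Laurent polynomial `x`, as a unit. -/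
def xUnit : LatticeRingˣ := latticeUnit (.ofAdd 1, 1, 1)

/-- The Laurent polynomial `y`, as a unit. -/
def yUnit : LatticeRingˣ := latticeUnit (1, .ofAdd 1, 1)

/-- The Laurent polynomial `z`, as a unit. -/
def zUnit : LatticeRingˣ := latticeUnit (1, 1, .ofAdd 1)

theorem map_latticeUnit (f : Lattice →* Lattice) (n : Lattice) :
    Units.map (MonoidAlgebra.mapDomainRingHom Rr f : LatticeRing →* LatticeRing) (latticeUnit n) =
      latticeUnit (f n) := by
  ext; simp [latticeUnit]

theorem latticeRingHom_latticeUnit (n : Lattice) :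
    latticeRingHom (latticeUnit n) = G (latticeHom n) := by
  simp [latticeUnit, latticeRingHom, G]

theorem latticeRingHom_latticeUnit_inv (n : Lattice) :
    latticeRingHom ↑(latticeUnit n)⁻¹ = G (latticeHom n)⁻¹ := by
  rw [← map_inv, latticeRingHom_latticeUnit, map_inv]

theorem latticeRingHom_algebraMap (r : Rr) :
    latticeRingHom (algebraMap Rr LatticeRing r) = algebraMap Rr (MonoidAlgebra Rr P) r :=
  mapDomainRingHom_algebraMap latticeHom r

theorem promislowSystem_groupRing :
    PromislowSystem (S := LatticeRing) xUnit yUnit zUnit (MonoidAlgebra.mapDomainRingHom Rr conjA)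
      (MonoidAlgebra.mapDomainRingHom Rr conjB) (G pa) (G pb) where
  a_mul_smul p m := by
    simp only [latticeRing_smul_def, ← mul_assoc]
    exact congrArg (· * m) (semiconjBy_mapDomainRingHom semiconjBy_pa_latticeHom p).eq
  b_mul_smul p m := by
    simp only [latticeRing_smul_def, ← mul_assoc]
    exact congrArg (· * m) (semiconjBy_mapDomainRingHom semiconjBy_pb_latticeHom p).eq
  a_mul_a := by
    rw [Units.smul_def, latticeRing_smul_def, mul_one, xUnit, latticeRingHom_latticeUnit,
      latticeHom_x, px, sq, G_mul]
  b_mul_b := by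
    rw [Units.smul_def, latticeRing_smul_def, mul_one, yUnit, latticeRingHom_latticeUnit,
      latticeHom_y, py, sq, G_mul]
  ab_mul_ab := by
    rw [Units.smul_def, latticeRing_smul_def, mul_one, zUnit, latticeRingHom_latticeUnit,
      latticeHom_z, pz, sq, G_mul, G_mul]
  map_σ_x := map_latticeUnit conjA _
  map_σ_y := map_latticeUnit conjA _
  map_σ_z := map_latticeUnit conjA _
  map_τ_x := map_latticeUnit conjB _
  map_τ_y := map_latticeUnit conjB _
  map_τ_z := map_latticeUnit conjB _

theorem s_pow_four : s ^ 4 = -1 :=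
  eq_neg_of_add_eq_zero_left <| Ideal.Quotient.eq_zero_iff_mem.mpr <|
    Ideal.subset_span (.inl rfl)

theorem t_pow_four : t ^ 4 = -1 :=
  eq_neg_of_add_eq_zero_left <| Ideal.Quotient.eq_zero_iff_mem.mpr <|
    Ideal.subset_span (.inr rfl)

theorem eval_alpha :
    (alpha xUnit yUnit zUnit (algebraMap Rr LatticeRing s) (algebraMap Rr LatticeRing t)).eval
      (G pa) (G pb) = αU := by
  simp only [Coords.eval, alpha, αU, α1, αa, αb, αab, xUnit, yUnit, zUnit, latticeRing_smul_def,
    map_add, map_sub, map_mul, map_neg, map_pow, map_one, Units.val_mul, Units.val_pow_eq_pow_val,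
    latticeRingHom_latticeUnit, latticeRingHom_latticeUnit_inv, latticeRingHom_algebraMap,
    latticeHom_x, latticeHom_y, latticeHom_z, G_mul, G_pow, Algebra.smul_def, mul_assoc, mul_one]

theorem eval_beta :
    (beta xUnit yUnit zUnit (algebraMap Rr LatticeRing s) (algebraMap Rr LatticeRing t)).eval
      (G pa) (G pb) = βU := by
  simp only [Coords.eval, beta, βU, β1, βa, βb, βab, xUnit, yUnit, zUnit, latticeRing_smul_def,
    map_add, map_sub, map_mul, map_neg, map_pow, map_one, Units.val_mul, Units.val_pow_eq_pow_val,
    latticeRingHom_latticeUnit, latticeRingHom_latticeUnit_inv, latticeRingHom_algebraMap,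
    latticeHom_x, latticeHom_y, latticeHom_z, G_mul, G_pow, Algebra.smul_def, mul_assoc, mul_one]

end Promislow

/-- In the group ring `R[P]`, the product `β·α` equals `1`; consequently `α` is a unit
of `R[P]` with inverse `β`. -/
theorem beta_mul_alpha : βU * αU = 1 ∧
    ∃ u : (MonoidAlgebra Rr P)ˣ, (u : MonoidAlgebra Rr P) = αU ∧
      ((u⁻¹ : (MonoidAlgebra Rr P)ˣ) : MonoidAlgebra Rr P) = βU := by
  open Promislow in
  have pow_four_eq {r : Rr} (hr : r ^ 4 = -1) : algebraMap Rr LatticeRing r ^ 4 = -1 := by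
    rw [← map_pow, hr, map_neg, map_one]
  have hβα := promislowSystem_groupRing.eval_beta_mul_eval_alpha (pow_four_eq s_pow_four)
    (pow_four_eq t_pow_four) (mapDomainRingHom_algebraMap _ _) (mapDomainRingHom_algebraMap _ _)
    (mapDomainRingHom_algebraMap _ _) (mapDomainRingHom_algebraMap _ _)
  have hαβ := promislowSystem_groupRing.eval_mul_eval_symm hβα
  rw [eval_alpha, eval_beta] at hβα hαβ
  exact ⟨hβα, ⟨αU, βU, hαβ, hβα⟩, rfl, rfl⟩
end
end

section
/- The group ring ℂ[P] contains a unit that is not a trivial unit. -/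
noncomputable section

/-!
The elements `x = a²`, `y = b²`, `z = (ab)²` commute, and conjugation by `a` or `b` fixes or inverts
each of them. Explicit elements `t₀ = p + s ab` and `t₁ = q a + r b`, whose coefficients are Laurent
polynomials in `x, y, z`, commute and satisfy `t₀² = t₁² + (2 - z - z⁻¹) t₀`. Hence, whenever
`F(z⁻¹) = F(z) + (2 - z - z⁻¹) G(z)` and `G(z⁻¹) = -G(z)`, the element `α = F(z) + G(z) (t₀ + t₁)`
has a right multiple equal to `F(z) F(z⁻¹)`. A primitive 18th root of unity `w` gives such `F` and
`G` with `F(z) F(z⁻¹)` dividing `z¹⁸ - 1`. So `1 + α β = z¹⁸` for some `β`, and the unit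
`u = 1 + β α` satisfies `α u = z¹⁸ α`.

If `u` were `c g`, then, the support of `α` being finite, every `s` in it would satisfy
`s gᵏ = z¹⁸ᵏ s` for some `k > 0`. In a quotient of `P` where `z` has infinite order, the support of
the image of `α` still contains an element that commutes with `z` and one that inverts it, so some
positive power of `z` would equal its own inverse there, which is absurd.
-/

section Intertwining

/-- The unit is `u = 1 + βα`, since `α(1 + βα) = (1 + αβ)α`. -/
theorem exists_unit_mul_eq_unit_mul {R : Type*} [Ring R] {α β : R} (v : Rˣ)
    (h : 1 + α * β = v) : ∃ u : Rˣ, α * u = v * α := by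
  refine ⟨⟨1 + β * α, 1 - β * ↑v⁻¹ * α, ?_, ?_⟩, ?_⟩
  · calc (1 + β * α) * (1 - β * ↑v⁻¹ * α)
        = 1 + β * (1 - (1 + α * β) * ↑v⁻¹) * α := by noncomm_ring
      _ = 1 := by simp [h]
  · calc (1 - β * ↑v⁻¹ * α) * (1 + β * α)
        = 1 + β * (1 - ↑v⁻¹ * (1 + α * β)) * α := by noncomm_ring
      _ = 1 := by simp [h]
  · calc α * (1 + β * α) = (1 + α * β) * α := by noncomm_ring
      _ = v * α := by rw [h]

theorem add_mul_sub_eq_map_mul {S R : Type*} [CommRing S] [Ring R] (j : S →+* R)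
    {f f' g n : S} {t₀ t₁ : R}
    (hf₀ : Commute t₀ (j f')) (hg₀ : Commute t₀ (j g))
    (hf₁ : t₁ * j f' = j f * t₁) (hg₁ : t₁ * j g = -(j g * t₁))
    (ht : (t₀ + t₁) * (t₀ - t₁) = j n * t₀) (hf : f' = f + n * g) :
    (j f + j g * (t₀ + t₁)) * (j f' - (t₀ - t₁) * j g) = j (f * f') := by
  have cross : j f * j g * t₀ + j g * j n * j g * t₀ = j g * j f' * t₀ := by
    simp only [← map_mul, ← add_mul, ← map_add]
    congr 2
    rw [hf]
    ring
  calc (j f + j g * (t₀ + t₁)) * (j f' - (t₀ - t₁) * j g)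
      = j f * j f' - j f * (t₀ * j g) + j f * (t₁ * j g) + j g * (t₀ * j f')
          + j g * (t₁ * j f') - j g * ((t₀ + t₁) * (t₀ - t₁)) * j g := by noncomm_ring
    _ = j f * j f' - j f * (j g * t₀) - j f * (j g * t₁) + j g * (j f' * t₀)
          + j g * (j f * t₁) - j g * (j n * (t₀ * j g)) := by
        rw [hf₁, hg₁, hf₀.eq, ht, hg₀.eq]
        noncomm_ring
        rw [hg₀.eq]
    _ = j f * j f' - (j f * j g * t₀ + j g * j n * j g * t₀) + j g * j f' * t₀
          + (j g * j f - j f * j g) * t₁ := by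
        rw [hg₀.eq]
        noncomm_ring
    _ = j (f * f') := by
        rw [cross, ← map_mul j g f, mul_comm g f, map_mul]
        simp

end Intertwining

section Support

variable {K G : Type*} [Semiring K] [Group G]

theorem exists_semiconjBy_pow_of_semiconjBy_single {α : MonoidAlgebra K G} {y g : G} {c : Kˣ}
    (h : SemiconjBy α (MonoidAlgebra.single g (c : K)) (MonoidAlgebra.single y 1))
    {s : G} (hs : α.coeff s ≠ 0) : ∃ k > 0, SemiconjBy s (g ^ k) (y ^ k) := by
  have mem_support (k : ℕ) : (y ^ k)⁻¹ * s * g ^ k ∈ (α.coeff.support : Set G) := by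
    have coeff_eq := congrArg (fun β => β.coeff (s * g ^ k)) (h.pow_right k).eq
    simp only [MonoidAlgebra.single_pow, MonoidAlgebra.coeff_mul_single_apply,
      MonoidAlgebra.coeff_single_mul_apply, mul_inv_cancel_right, one_pow, one_mul,
      ← mul_assoc] at coeff_eq
    rw [Finset.mem_coe, Finsupp.mem_support_iff, ← coeff_eq, ← Units.val_pow_eq_pow_val]
    exact (c ^ k).isUnit.mul_left_eq_zero.not.2 hs
  obtain ⟨i, j, hij, heq⟩ :=
    Set.Finite.exists_lt_map_eq_of_forall_mem mem_support α.coeff.support.finite_toSet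
  refine ⟨j - i, Nat.sub_pos_of_lt hij, ?_⟩
  obtain ⟨k, rfl⟩ := Nat.exists_eq_add_of_le' hij.le
  rw [Nat.add_sub_cancel, SemiconjBy, ← inv_mul_eq_iff_eq_mul]
  refine mul_right_cancel (b := g ^ i) ?_
  simpa [pow_add, mul_assoc] using heq.symm

theorem not_semiconjBy_single {α : MonoidAlgebra K G} {y : G} (hy : ¬IsOfFinOrder y)
    {s t : G} (hs : α.coeff s ≠ 0) (ht : α.coeff t ≠ 0)
    (hsy : SemiconjBy s y y) (hty : SemiconjBy t y y⁻¹) (g : G) (c : Kˣ) :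
    ¬SemiconjBy α (MonoidAlgebra.single g (c : K)) (MonoidAlgebra.single y 1) := by
  intro h
  obtain ⟨k, hk, hgk⟩ := exists_semiconjBy_pow_of_semiconjBy_single h hs
  obtain ⟨l, hl, hgl⟩ := exists_semiconjBy_pow_of_semiconjBy_single h ht
  have gk_eq : g ^ k = y ^ k :=
    mul_left_cancel (hgk.eq.trans (hsy.pow_right k).eq.symm)
  have gl_eq : g ^ l = (y ^ l)⁻¹ := by
    have := (hty.pow_right l).inv_right.eq
    rw [inv_pow, inv_inv] at this
    exact mul_left_cancel (hgl.eq.trans this.symm)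
  have y_pow : y ^ (k * l) = (y ^ (k * l))⁻¹ := by
    calc y ^ (k * l) = g ^ (k * l) := by rw [pow_mul, pow_mul, gk_eq]
      _ = (y ^ (k * l))⁻¹ := by rw [mul_comm, pow_mul, pow_mul, gl_eq, inv_pow]
  refine hy (isOfFinOrder_iff_pow_eq_one.2 ⟨k * l * 2, by positivity, ?_⟩)
  rw [pow_mul, sq, mul_eq_one_iff_eq_inv, ← y_pow]

end Support

section Inversion

variable {G : Type*} [Group G] {g c m : G}

theorem semiconjBy_inv_of_inv_mul_mul_mul_eq_one (h : g⁻¹ * m * g * m = 1) :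
    SemiconjBy g m m⁻¹ := by
  calc g * m = m⁻¹ * g * (g⁻¹ * m * g * m) := by group
    _ = m⁻¹ * g := by rw [h, mul_one]

theorem inv_left_semiconjBy_inv (h : SemiconjBy g m m⁻¹) : SemiconjBy g⁻¹ m m⁻¹ := by
  simpa only [inv_inv] using h.inv_right.inv_symm_left

theorem commute_sq_of_semiconjBy_inv_s3 (h : SemiconjBy g m m⁻¹) : Commute (g ^ 2) m := by
  rw [Commute, sq]
  simpa only [inv_inv] using h.inv_right.mul_left h

theorem semiconjBy_sq_inv_of_mul_inv (hg : SemiconjBy g c (m * c⁻¹)) (hc : SemiconjBy c m m⁻¹) :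
    SemiconjBy g (c ^ 2) (c ^ 2)⁻¹ := by
  have square : (m * c⁻¹) ^ 2 = (c ^ 2)⁻¹ := by
    calc (m * c⁻¹) ^ 2 = m * (c⁻¹ * m) * c⁻¹ := by rw [sq]; group
      _ = (c ^ 2)⁻¹ := by rw [(inv_left_semiconjBy_inv hc).eq]; group
  simpa only [square] using hg.pow_right 2

end Inversion

section NormalSubgroup

variable {G : Type*} [Group G]

/-- The elements of `G` as units of `K[G]`. -/
def groupUnit (K : Type*) [Semiring K] : G →* (MonoidAlgebra K G)ˣ :=
  (MonoidAlgebra.of K G).toHomUnits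

theorem mem_normalizer_closure {S : Set G} {g : G}
    (h : ∀ s ∈ S, SemiconjBy g s s ∨ SemiconjBy g s s⁻¹) :
    g ∈ Subgroup.normalizer (Subgroup.closure S : Set G) := by
  have conj_mem {g : G} (h : ∀ s ∈ S, SemiconjBy g s s ∨ SemiconjBy g s s⁻¹) {n : G}
      (hn : n ∈ Subgroup.closure S) : g * n * g⁻¹ ∈ Subgroup.closure S := by
    induction hn using Subgroup.closure_induction with
    | mem s hs =>
      have hs' := Subgroup.subset_closure hs
      rcases h s hs with h | h
      · rwa [h.eq, mul_inv_cancel_right]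
      · rw [h.eq, mul_inv_cancel_right]
        exact inv_mem hs'
    | one => simp
    | mul m n _ _ hm hn => simpa [mul_assoc] using mul_mem hm hn
    | inv n _ hn => simpa [mul_assoc] using inv_mem hn
  have h_inv : ∀ s ∈ S, SemiconjBy g⁻¹ s s ∨ SemiconjBy g⁻¹ s s⁻¹ := fun s hs =>
    (h s hs).imp SemiconjBy.inv_symm_left inv_left_semiconjBy_inv
  refine Subgroup.mem_normalizer_iff.2 fun n => ⟨conj_mem h, fun hn => ?_⟩
  simpa [mul_assoc] using conj_mem h_inv hn

variable (K : Type*) [CommSemiring K] (N : Subgroup G)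

/-- The inclusion `K[N] → K[G]`. -/
def inclusion : MonoidAlgebra K N →+* MonoidAlgebra K G :=
  MonoidAlgebra.mapDomainRingHom K N.subtype

/-- The endomorphism of `K[N]` that extends the conjugation `n ↦ g n g⁻¹` of `N`. -/
def conjugation [N.Normal] (g : G) : MonoidAlgebra K N →+* MonoidAlgebra K N :=
  MonoidAlgebra.mapDomainRingHom K (MulAut.conjNormal g : N ≃* N).toMonoidHom

variable {K N}

/-- The element `u g` of `K[G]`, for a coefficient `u ∈ K[N]` and a representative `g` of a coset
of `N`. -/
def onCoset (u : MonoidAlgebra K N) (g : G) : MonoidAlgebra K G :=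
  inclusion K N u * groupUnit K g

theorem inclusion_groupUnit (n : N) :
    inclusion K N (groupUnit K n) = groupUnit K (n : G) := by
  simp [inclusion, groupUnit]

theorem onCoset_add (u v : MonoidAlgebra K N) (g : G) :
    onCoset (u + v) g = onCoset u g + onCoset v g := by
  simp only [onCoset, map_add, add_mul]

theorem onCoset_coe_mul (u : MonoidAlgebra K N) (n : N) (g : G) :
    onCoset u (n * g) = onCoset (u * (groupUnit K n : MonoidAlgebra K N)) g := by
  simp only [onCoset, map_mul, Units.val_mul, mul_assoc, inclusion_groupUnit]

theorem onCoset_coe (u : MonoidAlgebra K N) (n : N) :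
    onCoset u n = inclusion K N (u * (groupUnit K n : MonoidAlgebra K N)) := by
  rw [onCoset, map_mul, inclusion_groupUnit]

theorem inclusion_mul_onCoset (u v : MonoidAlgebra K N) (g : G) :
    inclusion K N u * onCoset v g = onCoset (u * v) g := by
  simp only [onCoset, map_mul, mul_assoc]

variable [N.Normal]

theorem groupUnit_mul_inclusion (g : G) (u : MonoidAlgebra K N) :
    groupUnit K g * inclusion K N u = inclusion K N (conjugation K N g u) * groupUnit K g := by
  induction u using MonoidAlgebra.induction_linear with
  | zero => simp
  | add u v hu hv => simp only [map_add, mul_add, add_mul, hu, hv]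
  | single n k => simp [inclusion, conjugation, groupUnit]

theorem map_conjugation_groupUnit {g : G} {m n : N} (h : SemiconjBy g (m : G) n) :
    Units.map (conjugation K N g : MonoidAlgebra K N →* MonoidAlgebra K N) (groupUnit K m) =
      groupUnit K n := by
  have conj_eq : MulAut.conjNormal g m = n := by
    ext
    rw [MulAut.conjNormal_apply, h.eq, mul_inv_cancel_right]
  ext1
  simp [conjugation, groupUnit, conj_eq]

theorem conjugation_algebraMap (g : G) (k : K) :
    conjugation K N g (algebraMap K _ k) = algebraMap K _ k := by
  simp [conjugation]

theorem onCoset_mul_onCoset (u v : MonoidAlgebra K N) (g h : G) :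
    onCoset u g * onCoset v h = onCoset (u * conjugation K N g v) (g * h) := by
  simp only [onCoset, map_mul, Units.val_mul, mul_assoc]
  rw [← mul_assoc (groupUnit K g : MonoidAlgebra K G), groupUnit_mul_inclusion, mul_assoc]

open scoped IsMulCommutative in
theorem onCoset_mul_inclusion [IsMulCommutative N] (u v : MonoidAlgebra K N) (g : G) :
    onCoset u g * inclusion K N v = inclusion K N (conjugation K N g v) * onCoset u g := by
  simp only [onCoset, mul_assoc, groupUnit_mul_inclusion]
  simp only [← mul_assoc, ← map_mul, mul_comm u]

end NormalSubgroup

section PromislowGroup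

theorem semiconjBy_pb_px : SemiconjBy pb px px⁻¹ :=
  semiconjBy_inv_of_inv_mul_mul_mul_eq_one <|
    PresentedGroup.one_of_mem (rels := Prels) (Set.mem_insert _ _)

theorem semiconjBy_pa_py : SemiconjBy pa py py⁻¹ :=
  semiconjBy_inv_of_inv_mul_mul_mul_eq_one <|
    PresentedGroup.one_of_mem (rels := Prels) (Set.mem_insert_of_mem _ rfl)

theorem commute_pa_px : Commute pa px := Commute.self_pow pa 2

theorem commute_pb_py : Commute pb py := Commute.self_pow pb 2

theorem commute_px_py : Commute px py := commute_sq_of_semiconjBy_inv_s3 semiconjBy_pa_py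

theorem semiconjBy_pa_mul_pb_px : SemiconjBy (pa * pb) px px⁻¹ :=
  SemiconjBy.mul_left commute_pa_px.inv_right semiconjBy_pb_px

theorem semiconjBy_pa_mul_pb_py : SemiconjBy (pa * pb) py py⁻¹ :=
  semiconjBy_pa_py.mul_left commute_pb_py

theorem pb_mul_pa : pb * pa = px⁻¹ * py * (pa * pb)⁻¹ := by
  calc pb * pa = pb * px * pa⁻¹ := by rw [px]; group
    _ = px⁻¹ * pb * pa⁻¹ := by rw [semiconjBy_pb_px.eq]
    _ = px⁻¹ * py * (pa * pb)⁻¹ := by rw [py]; group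

theorem semiconjBy_pa_pz : SemiconjBy pa pz pz⁻¹ := by
  refine semiconjBy_sq_inv_of_mul_inv (m := px * py) ?_ ?_
  · simp [SemiconjBy, px, py, sq, mul_assoc]
  · simpa [commute_px_py.symm.inv_inv.eq] using
      semiconjBy_pa_mul_pb_px.mul_right semiconjBy_pa_mul_pb_py

theorem semiconjBy_pb_pz : SemiconjBy pb pz pz⁻¹ := by
  refine semiconjBy_sq_inv_of_mul_inv (m := px⁻¹ * py) ?_ ?_
  · rw [SemiconjBy, ← pb_mul_pa, mul_assoc]
  · simpa [commute_px_py.symm.inv_left.eq] using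
      semiconjBy_pa_mul_pb_px.inv_right.mul_right semiconjBy_pa_mul_pb_py

theorem commute_pz_px : Commute pz px := commute_sq_of_semiconjBy_inv_s3 semiconjBy_pa_mul_pb_px

theorem commute_pz_py : Commute pz py := commute_sq_of_semiconjBy_inv_s3 semiconjBy_pa_mul_pb_py

/-- The translation subgroup of `P`, regarded as a group of isometries of `ℝ³`: the free abelian
group of rank three generated by `x`, `y` and `z`. -/
def translations : Subgroup P := Subgroup.closure {px, py, pz}

instance : IsMulCommutative translations := by
  refine Subgroup.isMulCommutative_closure ?_
  simp [commute_px_py.eq, commute_pz_px.eq, commute_pz_py.eq]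

instance : translations.Normal := by
  have pa_mem : pa ∈ Subgroup.normalizer (translations : Set P) := by
    refine mem_normalizer_closure ?_
    simp [commute_pa_px.semiconjBy, semiconjBy_pa_py, semiconjBy_pa_pz]
  have pb_mem : pb ∈ Subgroup.normalizer (translations : Set P) := by
    refine mem_normalizer_closure ?_
    simp [semiconjBy_pb_px, commute_pb_py.semiconjBy, semiconjBy_pb_pz]
  refine Subgroup.normalizer_eq_top_iff.1 (eq_top_iff.2 fun g _ => ?_)
  refine PresentedGroup.generated_by _ _ (fun i => ?_) g
  fin_cases i
  exacts [pa_mem, pb_mem]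

/-- The translation `x` as an element of `translations`. -/
def transX : translations := ⟨px, Subgroup.subset_closure (by simp)⟩

/-- The translation `y` as an element of `translations`. -/
def transY : translations := ⟨py, Subgroup.subset_closure (by simp)⟩

/-- The translation `z` as an element of `translations`. -/
def transZ : translations := ⟨pz, Subgroup.subset_closure (by simp)⟩

theorem pa_mul_pa : pa * pa = transX := (sq pa).symm

theorem pb_mul_pb : pb * pb = transY := (sq pb).symm

theorem pa_mul_pb_mul_self : pa * pb * (pa * pb) = transZ := (sq (pa * pb)).symm

theorem pb_mul_pa_eq_coe_mul :
    pb * pa = ↑(transX⁻¹ * transY * transZ⁻¹) * (pa * pb) := by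
  change _ = px⁻¹ * py * pz⁻¹ * (pa * pb)
  rw [pb_mul_pa, pz, sq]
  group

theorem pa_mul_pb_mul_pa_eq_coe_mul : pa * pb * pa = ↑(transY⁻¹ * transZ) * pb := by
  change _ = py⁻¹ * pz * pb
  calc pa * pb * pa = pz * py⁻¹ * pb := by rw [pz, py, sq, sq]; group
    _ = py⁻¹ * pz * pb := by rw [commute_pz_py.inv_right.eq]

theorem pa_mul_pb_mul_pb_eq_coe_mul : pa * pb * pb = ↑transY⁻¹ * pa := by
  change _ = py⁻¹ * pa
  rw [← semiconjBy_pa_py.eq, mul_assoc, py, sq]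

theorem pa_mul_pa_mul_pb_eq_coe_mul : pa * (pa * pb) = transX * pb := by
  rw [← mul_assoc, pa_mul_pa]

theorem pb_mul_pa_mul_pb_eq_coe_mul : pb * (pa * pb) = ↑(transX⁻¹ * transZ⁻¹) * pa := by
  change _ = px⁻¹ * pz⁻¹ * pa
  calc pb * (pa * pb) = pa⁻¹ * pz := by rw [pz, sq]; group
    _ = pz⁻¹ * pa⁻¹ := inv_left_semiconjBy_inv semiconjBy_pa_pz
    _ = pz⁻¹ * px⁻¹ * pa := by rw [px, sq]; group
    _ = px⁻¹ * pz⁻¹ * pa := by rw [commute_pz_px.inv_inv.eq]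

end PromislowGroup

section Coefficients

variable {S : Type*} [CommRing S]

/-- The coefficient `p` of `1` in `evenPart`, for units `x`, `y` that stand for the translations. -/
def coeffOne (x y : Sˣ) : S := 4 + x + ↑x⁻¹ + y + ↑y⁻¹

/-- The coefficient `q` of `a` in `oddPart`. -/
def coeffA (x y z : Sˣ) : S := (1 + ↑x⁻¹) * (2 + z) + ↑x⁻¹ * y + ↑y⁻¹

/-- The coefficient `r` of `b` in `oddPart`. -/
def coeffB (x y z : Sˣ) : S :=
  z * (1 + 2 * x * ↑y⁻¹ + 2 * x + x ^ 2 * ↑y⁻¹) + x + x * ↑y⁻¹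

/-- The coefficient `s` of `ab` in `evenPart`. -/
def coeffAB (x y z : Sˣ) : S := (1 + x) * (1 + y) * (1 + ↑z⁻¹)

section Map

variable {S' : Type*} [CommRing S'] (σ : S →+* S') (x y z : Sˣ)

theorem map_coeffOne :
    σ (coeffOne x y) = coeffOne (Units.map σ x) (Units.map σ y) := by
  simp [coeffOne, ← map_inv, map_ofNat]

theorem map_coeffA :
    σ (coeffA x y z) = coeffA (Units.map σ x) (Units.map σ y) (Units.map σ z) := by
  simp [coeffA, ← map_inv, map_ofNat]

theorem map_coeffB :
    σ (coeffB x y z) = coeffB (Units.map σ x) (Units.map σ y) (Units.map σ z) := by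
  simp [coeffB, ← map_inv, map_ofNat]

theorem map_coeffAB :
    σ (coeffAB x y z) = coeffAB (Units.map σ x) (Units.map σ y) (Units.map σ z) := by
  simp [coeffAB, ← map_inv]

end Map

section Identities

variable (x y z : Sˣ)

theorem coeffOne_inv_left : coeffOne x⁻¹ y = coeffOne x y := by
  simp only [coeffOne, inv_inv]
  ring

theorem coeffOne_inv_right : coeffOne x y⁻¹ = coeffOne x y := by
  simp only [coeffOne, inv_inv]
  ring

-- The next four identities express `t₀² = t₁² + (2 - z - z⁻¹) t₀` and `t₀ t₁ = t₁ t₀`, read off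
-- coset by coset, for the elements `t₀ = evenPart` and `t₁ = oddPart`.
theorem coeffOne_mul_self_add_eq :
    coeffOne x y * coeffOne x y + coeffAB x y z * coeffAB x⁻¹ y⁻¹ z * z =
      coeffA x y z * coeffA x y⁻¹ z⁻¹ * x + coeffB x y z * coeffB x⁻¹ y z⁻¹ * y
        + (2 - z - ↑z⁻¹) * coeffOne x y := by
  have hx := x.mul_inv
  have hy := y.mul_inv
  have hz := z.mul_inv
  simp only [coeffOne, coeffA, coeffB, coeffAB, inv_inv]
  grind

theorem coeffOne_mul_coeffAB_add_eq :
    coeffOne x y * coeffAB x y z + coeffAB x y z * coeffOne x y =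
      coeffA x y z * coeffB x y⁻¹ z⁻¹ + coeffB x y z * coeffA x⁻¹ y z⁻¹ * ↑(x⁻¹ * y * z⁻¹)
        + (2 - z - ↑z⁻¹) * coeffAB x y z := by
  have hx := x.mul_inv
  have hy := y.mul_inv
  have hz := z.mul_inv
  simp only [coeffOne, coeffA, coeffB, coeffAB, inv_inv, Units.val_mul]
  grind

theorem coeffAB_mul_coeffB_mul_eq :
    coeffAB x y z * coeffB x⁻¹ y⁻¹ z * ↑y⁻¹ =
      coeffB x y z * coeffAB x⁻¹ y z⁻¹ * ↑(x⁻¹ * z⁻¹) := by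
  have hx := x.mul_inv
  have hy := y.mul_inv
  have hz := z.mul_inv
  simp only [coeffB, coeffAB, inv_inv, Units.val_mul]
  grind

theorem coeffAB_mul_coeffA_mul_eq :
    coeffAB x y z * coeffA x⁻¹ y⁻¹ z * ↑(y⁻¹ * z) =
      coeffA x y z * coeffAB x y⁻¹ z⁻¹ * x := by
  have hx := x.mul_inv
  have hy := y.mul_inv
  have hz := z.mul_inv
  simp only [coeffA, coeffAB, inv_inv, Units.val_mul]
  grind

end Identities

end Coefficients

section LaurentPolynomials

variable {S : Type*} [CommRing S] {w : S}

/-- The Laurent polynomial `F` with roots `w, w⁻², w⁻³, w⁻⁴`, for a root `w` of the cyclotomic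
polynomial `Φ₁₈`; note that then `w⁹ = -1`. -/
def laurentF (w : S) (z : Sˣ) : S :=
  ↑z⁻¹ ^ 2 * ((z - w) * (z + w ^ 7) * (z + w ^ 6) * (z + w ^ 5))

/-- The Laurent polynomial `G` that completes `laurentF` to a solution of `laurentF_inv`. -/
def laurentG (w : S) (z : Sˣ) : S := (1 + w) * (z - ↑z⁻¹)

theorem map_laurentF {S' : Type*} [CommRing S'] (σ : S →+* S') (w : S) (z : Sˣ) :
    σ (laurentF w z) = laurentF (σ w) (Units.map σ z) := by
  simp [laurentF, ← map_inv]

theorem map_laurentG {S' : Type*} [CommRing S'] (σ : S →+* S') (w : S) (z : Sˣ) :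
    σ (laurentG w z) = laurentG (σ w) (Units.map σ z) := by
  simp [laurentG, ← map_inv]

theorem laurentG_inv (z : Sˣ) : laurentG w z⁻¹ = -laurentG w z := by
  simp only [laurentG, inv_inv]
  ring

theorem laurentF_inv (hw : w ^ 6 = w ^ 3 - 1) (z : Sˣ) :
    laurentF w z⁻¹ = laurentF w z + (2 - z - ↑z⁻¹) * laurentG w z := by
  have hz := z.mul_inv
  simp only [laurentF, laurentG, inv_inv]
  grind

theorem inv_add_dvd_add (z : Sˣ) {c d : S} (h : c * d = 1) : ↑z⁻¹ + c ∣ z + d := by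
  refine ⟨d * z, ?_⟩
  rw [add_mul, mul_left_comm, z.inv_mul, ← mul_assoc c, h]
  ring

theorem prod_dvd_pow_eighteen_sub_one (hw : w ^ 6 = w ^ 3 - 1) (z : S) :
    (z - w) * (z + w ^ 7) * (z + w ^ 6) * (z + w ^ 5) *
      ((z + w ^ 8) * (z - w ^ 2) * (z - w ^ 3) * (z - w ^ 4)) ∣ z ^ 18 - 1 := by
  have phi_eighteen : (z - w) * (z + w ^ 8) ∣ z ^ 6 - z ^ 3 + 1 :=
    ⟨(z - w ^ 5) * (z + w ^ 4) * (z - w ^ 7) * (z + w ^ 2), by grind⟩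
  have phi_nine : (z + w ^ 7) * (z + w ^ 5) * ((z - w ^ 2) * (z - w ^ 4)) ∣ z ^ 6 + z ^ 3 + 1 :=
    ⟨(z + w) * (z - w ^ 8), by grind⟩
  have phi_six : (z + w ^ 6) * (z - w ^ 3) ∣ z ^ 2 - z + 1 := ⟨1, by grind⟩
  have factorization : z ^ 18 - 1 =
      (z ^ 6 - z ^ 3 + 1) * (z ^ 6 + z ^ 3 + 1) * (z ^ 2 - z + 1) *
        ((z ^ 2 - 1) * (z ^ 2 + z + 1)) := by ring
  rw [factorization]
  convert (mul_dvd_mul (mul_dvd_mul phi_eighteen phi_nine) phi_six).mul_right _ using 1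
  ac_rfl

theorem laurentF_mul_laurentF_inv_dvd (hw : w ^ 6 = w ^ 3 - 1) (z : Sˣ) :
    laurentF w z * laurentF w z⁻¹ ∣ (z : S) ^ 18 - 1 := by
  have roots_dvd : (↑z⁻¹ - w) * (↑z⁻¹ + w ^ 7) * (↑z⁻¹ + w ^ 6) * (↑z⁻¹ + w ^ 5) ∣
      (z + w ^ 8) * (z - w ^ 2) * (z - w ^ 3) * (z - w ^ 4) := by
    simp only [sub_eq_add_neg]
    refine mul_dvd_mul (mul_dvd_mul (mul_dvd_mul ?_ ?_) ?_) ?_ <;>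
      exact inv_add_dvd_add z (by grind)
  have eq_prod : laurentF w z * laurentF w z⁻¹ =
      (z - w) * (z + w ^ 7) * (z + w ^ 6) * (z + w ^ 5) *
        ((↑z⁻¹ - w) * (↑z⁻¹ + w ^ 7) * (↑z⁻¹ + w ^ 6) * (↑z⁻¹ + w ^ 5)) := by
    rw [laurentF, laurentF, inv_inv, mul_mul_mul_comm, ← mul_pow, z.inv_mul, one_pow, one_mul]
  rw [eq_prod]
  exact (mul_dvd_mul_left _ roots_dvd).trans (prod_dvd_pow_eighteen_sub_one hw _)

end LaurentPolynomials

section NontrivialUnit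

open scoped IsMulCommutative

variable (K : Type*) [CommRing K]

/-- The translation `x` as a unit of `K[translations]`. -/
abbrev unitX : (MonoidAlgebra K translations)ˣ := groupUnit K transX

/-- The translation `y` as a unit of `K[translations]`. -/
abbrev unitY : (MonoidAlgebra K translations)ˣ := groupUnit K transY

/-- The translation `z` as a unit of `K[translations]`. -/
abbrev unitZ : (MonoidAlgebra K translations)ˣ := groupUnit K transZ

theorem map_conjugation_pa :
    Units.map (conjugation K translations pa) (unitX K) = unitX K ∧
      Units.map (conjugation K translations pa) (unitY K) = (unitY K)⁻¹ ∧
      Units.map (conjugation K translations pa) (unitZ K) = (unitZ K)⁻¹ :=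
  ⟨map_conjugation_groupUnit commute_pa_px,
    (map_conjugation_groupUnit semiconjBy_pa_py).trans (map_inv _ _),
    (map_conjugation_groupUnit semiconjBy_pa_pz).trans (map_inv _ _)⟩

theorem map_conjugation_pb :
    Units.map (conjugation K translations pb) (unitX K) = (unitX K)⁻¹ ∧
      Units.map (conjugation K translations pb) (unitY K) = unitY K ∧
      Units.map (conjugation K translations pb) (unitZ K) = (unitZ K)⁻¹ :=
  ⟨(map_conjugation_groupUnit semiconjBy_pb_px).trans (map_inv _ _),
    map_conjugation_groupUnit commute_pb_py,
    (map_conjugation_groupUnit semiconjBy_pb_pz).trans (map_inv _ _)⟩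

theorem map_conjugation_pa_mul_pb :
    Units.map (conjugation K translations (pa * pb)) (unitX K) = (unitX K)⁻¹ ∧
      Units.map (conjugation K translations (pa * pb)) (unitY K) = (unitY K)⁻¹ ∧
      Units.map (conjugation K translations (pa * pb)) (unitZ K) = unitZ K :=
  ⟨(map_conjugation_groupUnit semiconjBy_pa_mul_pb_px).trans (map_inv _ _),
    (map_conjugation_groupUnit semiconjBy_pa_mul_pb_py).trans (map_inv _ _),
    map_conjugation_groupUnit (Commute.self_pow _ 2)⟩

/-- The element `t₀ = p + s ab`: the part of `t = p + q a + r b + s ab` supported on the group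
elements that commute with `z`. -/
def evenPart : MonoidAlgebra K P :=
  inclusion K translations (coeffOne (unitX K) (unitY K)) +
    onCoset (coeffAB (unitX K) (unitY K) (unitZ K)) (pa * pb)

/-- The element `t₁ = q a + r b`: the part of `t = p + q a + r b + s ab` supported on the group
elements that invert `z`. -/
def oddPart : MonoidAlgebra K P :=
  onCoset (coeffA (unitX K) (unitY K) (unitZ K)) pa +
    onCoset (coeffB (unitX K) (unitY K) (unitZ K)) pb

theorem commute_evenPart_inclusion {u : MonoidAlgebra K translations}
    (hu : conjugation K translations (pa * pb) u = u) :
    Commute (evenPart K) (inclusion K translations u) := by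
  rw [Commute, SemiconjBy, evenPart, add_mul, mul_add, onCoset_mul_inclusion, hu, ← map_mul,
    ← map_mul, mul_comm u]

theorem oddPart_mul_inclusion {u v : MonoidAlgebra K translations}
    (ha : conjugation K translations pa u = v) (hb : conjugation K translations pb u = v) :
    oddPart K * inclusion K translations u = inclusion K translations v * oddPart K := by
  rw [oddPart, add_mul, mul_add, onCoset_mul_inclusion, onCoset_mul_inclusion, ha, hb]

theorem commute_evenPart_oddPart : Commute (evenPart K) (oddPart K) := by
  obtain ⟨xa, ya, za⟩ := map_conjugation_pa K
  obtain ⟨xb, yb, zb⟩ := map_conjugation_pb K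
  obtain ⟨xc, yc, zc⟩ := map_conjugation_pa_mul_pb K
  rw [Commute, SemiconjBy, evenPart, oddPart]
  simp only [add_mul, mul_add, onCoset_mul_onCoset, inclusion_mul_onCoset, onCoset_mul_inclusion,
    map_coeffOne, map_coeffA, map_coeffB, map_coeffAB, xa, xb, xc, ya, yb, yc, za, zb, zc,
    coeffOne_inv_left, coeffOne_inv_right, pa_mul_pb_mul_pa_eq_coe_mul,
    pa_mul_pb_mul_pb_eq_coe_mul, pa_mul_pa_mul_pb_eq_coe_mul, pb_mul_pa_mul_pb_eq_coe_mul]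
  simp only [onCoset_coe_mul, map_mul, map_inv]
  rw [coeffAB_mul_coeffB_mul_eq, coeffAB_mul_coeffA_mul_eq]
  abel

theorem evenPart_mul_self :
    evenPart K * evenPart K = oddPart K * oddPart K +
      inclusion K translations (2 - unitZ K - ↑(unitZ K)⁻¹) * evenPart K := by
  obtain ⟨xa, ya, za⟩ := map_conjugation_pa K
  obtain ⟨xb, yb, zb⟩ := map_conjugation_pb K
  obtain ⟨xc, yc, zc⟩ := map_conjugation_pa_mul_pb K
  calc evenPart K * evenPart K
      = inclusion K translations (coeffOne (unitX K) (unitY K) * coeffOne (unitX K) (unitY K) +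
            coeffAB (unitX K) (unitY K) (unitZ K) *
              coeffAB (unitX K)⁻¹ (unitY K)⁻¹ (unitZ K) * unitZ K) +
          onCoset (coeffOne (unitX K) (unitY K) * coeffAB (unitX K) (unitY K) (unitZ K) +
            coeffAB (unitX K) (unitY K) (unitZ K) * coeffOne (unitX K) (unitY K)) (pa * pb) := by
        rw [evenPart]
        simp only [add_mul, mul_add, inclusion_mul_onCoset, onCoset_mul_inclusion,
          onCoset_mul_onCoset, pa_mul_pb_mul_self, onCoset_coe, map_coeffOne, map_coeffAB,
          coeffOne_inv_left, coeffOne_inv_right, xc, yc, zc]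
        simp only [map_add, map_mul, onCoset_add, mul_comm (coeffAB _ _ _) (coeffOne _ _)]
        abel
    _ = oddPart K * oddPart K +
          inclusion K translations (2 - unitZ K - ↑(unitZ K)⁻¹) * evenPart K := by
        rw [coeffOne_mul_self_add_eq, coeffOne_mul_coeffAB_add_eq, evenPart, oddPart]
        simp only [add_mul, mul_add, inclusion_mul_onCoset,
          onCoset_mul_onCoset, pa_mul_pa, pb_mul_pb, pb_mul_pa_eq_coe_mul, onCoset_coe,
          onCoset_coe_mul, map_coeffA, map_coeffB, xa, ya, za, xb, yb, zb]
        simp only [map_add, map_mul, map_inv, onCoset_add]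
        abel

variable {K}

/-- The element `α = F(z) + G(z) (t₀ + t₁)`, which satisfies `α u = z ^ 18 α` for a nontrivial
unit `u`. -/
def intertwiner (w : K) : MonoidAlgebra K P :=
  inclusion K translations (laurentF (algebraMap K _ w) (unitZ K)) +
    inclusion K translations (laurentG (algebraMap K _ w) (unitZ K)) * (evenPart K + oddPart K)

theorem exists_intertwiner_mul_eq {w : K} (hw : w ^ 6 = w ^ 3 - 1) :
    ∃ β : MonoidAlgebra K P, intertwiner w * β =
      inclusion K translations (laurentF (algebraMap K _ w) (unitZ K) *
        laurentF (algebraMap K _ w) (unitZ K)⁻¹) := by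
  have hw' := congrArg (algebraMap K (MonoidAlgebra K translations)) hw
  simp only [map_pow, map_sub, map_one] at hw'
  obtain ⟨-, -, za⟩ := map_conjugation_pa K
  obtain ⟨-, -, zb⟩ := map_conjugation_pb K
  obtain ⟨-, -, zc⟩ := map_conjugation_pa_mul_pb K
  refine ⟨_, add_mul_sub_eq_map_mul (inclusion K translations) (commute_evenPart_inclusion K ?_)
    (commute_evenPart_inclusion K ?_) (oddPart_mul_inclusion K ?_ ?_) ?_ ?_
    (laurentF_inv hw' (unitZ K))⟩
  · rw [map_laurentF, conjugation_algebraMap, map_inv, zc]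
  · rw [map_laurentG, conjugation_algebraMap, zc]
  · rw [map_laurentF, conjugation_algebraMap, map_inv, za, inv_inv]
  · rw [map_laurentF, conjugation_algebraMap, map_inv, zb, inv_inv]
  · rw [← neg_mul, ← map_neg, ← laurentG_inv]
    refine oddPart_mul_inclusion K ?_ ?_
    · rw [map_laurentG, conjugation_algebraMap, za]
    · rw [map_laurentG, conjugation_algebraMap, zb]
  · calc (evenPart K + oddPart K) * (evenPart K - oddPart K)
        = evenPart K * evenPart K - oddPart K * oddPart K := by
          rw [(commute_evenPart_oddPart K).mul_self_sub_mul_self_eq]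
      _ = inclusion K translations (2 - unitZ K - ↑(unitZ K)⁻¹) * evenPart K := by
          rw [evenPart_mul_self, add_sub_cancel_left]

theorem exists_unit_semiconjBy_intertwiner {w : K} (hw : w ^ 6 = w ^ 3 - 1) :
    ∃ u : (MonoidAlgebra K P)ˣ,
      SemiconjBy (intertwiner w) u (groupUnit K (pz ^ 18)) := by
  have hw' := congrArg (algebraMap K (MonoidAlgebra K translations)) hw
  simp only [map_pow, map_sub, map_one] at hw'
  obtain ⟨h, norm_mul⟩ := laurentF_mul_laurentF_inv_dvd hw' (unitZ K)
  obtain ⟨β, hβ⟩ := exists_intertwiner_mul_eq hw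
  have one_add_mul : 1 + intertwiner w * (β * inclusion K translations h) =
      groupUnit K (pz ^ 18) := by
    rw [← mul_assoc, hβ, ← map_mul, ← norm_mul, map_sub, map_one, add_sub_cancel, map_pow,
      inclusion_groupUnit, ← Units.val_pow_eq_pow_val, ← map_pow]
    rfl
  exact exists_unit_mul_eq_unit_mul _ one_add_mul

end NontrivialUnit

section Quotient

/-- A quotient of `P` in which `z` has infinite order and the coefficients of `intertwiner` at
`z ^ 2` and `z ^ 2 * a` survive. The factor of order four keeps `z ^ 2 * a` and `x⁻¹ * z ^ 2 * a`
apart. -/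
def quotientHom : P →* DihedralGroup 0 × Multiplicative (ZMod 4) :=
  PresentedGroup.toGroup
    (f := ![(.sr 0, Multiplicative.ofAdd 1), (.sr 1, Multiplicative.ofAdd 0)]) (by
      rintro r (rfl | rfl) <;> simp only [map_mul, map_inv, map_pow, FreeGroup.lift_apply_of] <;>
        decide)

theorem quotientHom_pa : quotientHom pa = (.sr 0, Multiplicative.ofAdd 1) := by
  simp [quotientHom, pa]

theorem quotientHom_pb : quotientHom pb = (.sr 1, Multiplicative.ofAdd 0) := by
  simp [quotientHom, pb]

theorem quotientHom_px : quotientHom px = (1, Multiplicative.ofAdd 2) := by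
  rw [px, map_pow, quotientHom_pa]
  decide

theorem quotientHom_py : quotientHom py = 1 := by
  rw [py, map_pow, quotientHom_pb]
  decide

theorem quotientHom_pz : quotientHom pz = (.r 2, Multiplicative.ofAdd 2) := by
  rw [pz, map_pow, map_mul, quotientHom_pa, quotientHom_pb]
  decide

variable {K : Type*} [CommRing K]

/-- The homomorphism of group rings induced by `quotientHom`. -/
def quotientRingHom (K : Type*) [CommRing K] :
    MonoidAlgebra K P →+* MonoidAlgebra K (DihedralGroup 0 × Multiplicative (ZMod 4)) :=
  MonoidAlgebra.mapDomainRingHom K quotientHom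

theorem quotientRingHom_groupUnit (g : P) :
    quotientRingHom K (groupUnit K g) = MonoidAlgebra.single (quotientHom g) 1 := by
  simp [quotientRingHom, groupUnit]

theorem quotientRingHom_algebraMap (w : K) :
    quotientRingHom K (inclusion K translations (algebraMap K _ w)) =
      MonoidAlgebra.single 1 w := by
  simp [quotientRingHom, inclusion]

theorem coeff_quotientRingHom_intertwiner (w : K) :
    (quotientRingHom K (intertwiner w)).coeff (.r 4, Multiplicative.ofAdd 0) = 1 ∧
      (quotientRingHom K (intertwiner w)).coeff (.sr (-4), Multiplicative.ofAdd 1) = 1 + w := by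
  simp only [intertwiner, laurentF, laurentG, evenPart, oddPart, onCoset, coeffOne, coeffA, coeffB,
    coeffAB, map_add, map_mul, map_sub, map_one, map_pow, map_ofNat, inclusion_groupUnit, ← map_inv,
    Units.val_mul, quotientRingHom_algebraMap, quotientRingHom_groupUnit]
  simp only [transX, transY, transZ, Subgroup.coe_inv, map_inv, quotientHom_px, quotientHom_py,
    quotientHom_pz, quotientHom_pa, quotientHom_pb]
  simp only [MonoidAlgebra.ofNat_def, MonoidAlgebra.one_def, mul_add, add_mul, sub_mul, mul_sub,
    MonoidAlgebra.single_mul_single, MonoidAlgebra.single_pow, MonoidAlgebra.coeff_add,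
    MonoidAlgebra.coeff_sub, MonoidAlgebra.coeff_single, Finsupp.add_apply, Finsupp.sub_apply,
    Finsupp.single_apply]
  constructor <;> simp +decide

theorem quotientHom_pz_pow_eighteen : quotientHom (pz ^ 18) = (.r 36, 1) := by
  rw [map_pow, quotientHom_pz]
  decide

theorem not_isOfFinOrder_quotientHom_pz_pow_eighteen :
    ¬IsOfFinOrder (quotientHom (pz ^ 18)) := by
  rw [quotientHom_pz_pow_eighteen, isOfFinOrder_iff_pow_eq_one]
  rintro ⟨n, hn, h⟩
  have r_eq : DihedralGroup.r ((36 : ZMod 0) * (n : ZMod 0)) = DihedralGroup.r 0 := by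
    rw [← DihedralGroup.r_pow]
    exact congrArg Prod.fst h
  have : (36 : ℤ) * n = 0 := DihedralGroup.r.inj r_eq
  lia

theorem ne_single_of_semiconjBy_intertwiner {w : K} (hw : w ≠ -1) {u : MonoidAlgebra K P}
    (hu : SemiconjBy (intertwiner w) u (groupUnit K (pz ^ 18))) (c : Kˣ) (g : P) :
    u ≠ MonoidAlgebra.single g (c : K) := by
  rintro rfl
  have one_add_ne_zero : 1 + w ≠ 0 := fun h => hw (eq_neg_of_add_eq_zero_right h)
  have : Nontrivial K := nontrivial_of_ne _ _ hw
  obtain ⟨coeff_rotation, coeff_reflection⟩ := coeff_quotientRingHom_intertwiner w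
  refine not_semiconjBy_single not_isOfFinOrder_quotientHom_pz_pow_eighteen
    (coeff_rotation.trans_ne one_ne_zero) (coeff_reflection.trans_ne one_add_ne_zero)
    ?_ ?_ (quotientHom g) c ?_
  · rw [quotientHom_pz_pow_eighteen, SemiconjBy]
    decide
  · rw [quotientHom_pz_pow_eighteen, SemiconjBy]
    decide
  · rw [← quotientRingHom_groupUnit]
    simpa [quotientRingHom] using hu.map (quotientRingHom K)

end Quotient

theorem pow_six_eq_and_ne_neg_one_of_isPrimitiveRoot {K : Type*} [CommRing K] [IsDomain K] {w : K}
    (hw : IsPrimitiveRoot w 18) : w ^ 6 = w ^ 3 - 1 ∧ w ≠ -1 := by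
  have pow_nine_ne : w ^ 9 - 1 ≠ 0 :=
    sub_ne_zero.2 (hw.pow_ne_one_of_pos_of_lt (by norm_num) (by norm_num))
  have pow_six_ne : w ^ 6 - 1 ≠ 0 :=
    sub_ne_zero.2 (hw.pow_ne_one_of_pos_of_lt (by norm_num) (by norm_num))
  have factorization : (w ^ 9 - 1) * ((w ^ 6 - 1) * (w ^ 6 - w ^ 3 + 1)) = 0 := by
    linear_combination (w ^ 3 - 1) * hw.pow_eq_one
  refine ⟨?_, ?_⟩
  · have root : w ^ 6 - w ^ 3 + 1 = 0 := by
      simpa only [mul_eq_zero, pow_nine_ne, pow_six_ne, false_or] using factorization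
    linear_combination root
  · rintro rfl
    exact pow_six_ne (by norm_num)

theorem complex_group_ring_has_nontrivial_unit_general {K : Type*} [CommRing K] (w : K)
    (hw : w ^ 6 = w ^ 3 - 1) (hw_ne : w ≠ -1) :
    ∃ u : (MonoidAlgebra K P)ˣ,
      ¬∃ (c : Kˣ) (g : P), (u : MonoidAlgebra K P) = MonoidAlgebra.single g (c : K) := by
  obtain ⟨u, hu⟩ := exists_unit_semiconjBy_intertwiner hw
  exact ⟨u, fun ⟨c, g, h⟩ => ne_single_of_semiconjBy_intertwiner hw_ne hu c g h⟩

/-- The group ring `ℂ[P]` contains a unit that is not a trivial unit. -/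
theorem complex_group_ring_has_nontrivial_unit :
    ∃ u : (MonoidAlgebra ℂ P)ˣ,
      ¬∃ (c : ℂˣ) (g : P), (u : MonoidAlgebra ℂ P) = MonoidAlgebra.single g (c : ℂ) := by
  obtain ⟨hw, hw_ne⟩ :=
    pow_six_eq_and_ne_neg_one_of_isPrimitiveRoot (Complex.isPrimitiveRoot_exp 18 (by norm_num))
  exact complex_group_ring_has_nontrivial_unit_general _ hw hw_ne
end
end
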